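/- Let β > 0. There exists a constant C > 0 depending only on β such that for all integers n ≥ 1, |Σ_{1≤a<b<c≤n} a^{−2/(2+β)}·b^{−(1+β)/(2+β)}·c^{−(1+β)/(2+β)} − ((2+β)²/(β(1+β)))·n| ≤ C·n^{2/(2+β)}. -/

import Mathlib

/-! Sum over the smallest index first. Since `k ^ (u - 1)` is monotone in `k`, comparison with
an integral gives `∑_{k < n} k ^ (u - 1) = n ^ u / u + O(n ^ (u - 1) + 1)`. Hence
`F n = A n ^ s + O(n ^ t)` implies
`∑_{k < n} k ^ (q - 1) F k = A / (s + q) n ^ (s + q) + O(n ^ (t + q))`, provided that `s ≤ t + 1`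
and both exponents are positive, so that the comparison error is absorbed. The sum over `a` is of
the form `F`, and this step is applied once for `b` and once for `c`.
-/

open Asymptotics Filter Finset

theorem sum_Icc_sum_Ioc_comm {M : Type*} [AddCommMonoid M] (m n : ℕ) (f : ℕ → ℕ → M) :
    ∑ a ∈ Icc m n, ∑ b ∈ Ioc a n, f a b = ∑ b ∈ Icc m n, ∑ a ∈ Ico m b, f a b :=
  sum_comm' fun a b => by simp only [mem_Icc, mem_Ioc, mem_Ico]; omega

theorem sum_Icc_sum_Ioc_sum_Ioc_comm {M : Type*} [AddCommMonoid M] (m n : ℕ)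
    (f : ℕ → ℕ → ℕ → M) :
    ∑ a ∈ Icc m n, ∑ b ∈ Ioc a n, ∑ c ∈ Ioc b n, f a b c =
      ∑ c ∈ Icc m n, ∑ b ∈ Ico m c, ∑ a ∈ Ico m b, f a b c := by
  calc
    _ = ∑ b ∈ Icc m n, ∑ a ∈ Ico m b, ∑ c ∈ Ioc b n, f a b c := sum_Icc_sum_Ioc_comm ..
    _ = ∑ b ∈ Icc m n, ∑ c ∈ Ioc b n, ∑ a ∈ Ico m b, f a b c :=
      sum_congr rfl fun _ _ => sum_comm
    _ = _ := sum_Icc_sum_Ioc_comm ..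

theorem abs_sum_Ico_sub_integral_le_of_monotoneOn {f : ℝ → ℝ} {m n : ℕ} (hmn : m ≤ n)
    (hf : MonotoneOn f (Set.Icc m n)) :
    |∑ k ∈ Ico m n, f k - ∫ x in (m : ℝ)..n, f x| ≤ f n - f m := by
  have sum_le := hf.sum_le_integral_Ico hmn
  have integral_le := hf.integral_le_sum_Ico hmn
  have telescope : ∑ k ∈ Ico m n, f (k + 1 : ℕ) - ∑ k ∈ Ico m n, f k = f n - f m := by
    rw [← sum_sub_distrib, sum_Ico_sub (fun k : ℕ => f k) hmn]
  rw [abs_le]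
  constructor <;> linarith

theorem abs_sum_Ico_sub_integral_le_of_antitoneOn {f : ℝ → ℝ} {m n : ℕ} (hmn : m ≤ n)
    (hf : AntitoneOn f (Set.Icc m n)) :
    |∑ k ∈ Ico m n, f k - ∫ x in (m : ℝ)..n, f x| ≤ f m - f n := by
  have h := abs_sum_Ico_sub_integral_le_of_monotoneOn hmn hf.neg
  simp only [sum_neg_distrib, intervalIntegral.integral_neg] at h
  rwa [← neg_sub', abs_neg, neg_sub_neg] at h

theorem abs_sum_Ico_rpow_sub_integral_le (s : ℝ) {m n : ℕ} (hm : 0 < m) (hmn : m ≤ n) :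
    |∑ k ∈ Ico m n, (k : ℝ) ^ s - ∫ x in (m : ℝ)..n, x ^ s| ≤ |(n : ℝ) ^ s - (m : ℝ) ^ s| := by
  have hpos : ∀ x ∈ Set.Icc (m : ℝ) n, 0 < x := fun x hx =>
    (Nat.cast_pos.2 hm).trans_le hx.1
  rcases le_total 0 s with hs | hs
  · exact (abs_sum_Ico_sub_integral_le_of_monotoneOn hmn fun x hx y _ hxy =>
      Real.rpow_le_rpow (hpos x hx).le hxy hs).trans (le_abs_self _)
  · rw [abs_sub_comm ((n : ℝ) ^ s)]
    exact (abs_sum_Ico_sub_integral_le_of_antitoneOn hmn fun x hx y _ hxy =>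
      Real.rpow_le_rpow_of_nonpos (hpos x hx) hxy hs).trans (le_abs_self _)

theorem abs_sum_Ico_rpow_sub_le {u : ℝ} (hu : 0 < u) {n : ℕ} (hn : 1 ≤ n) :
    |∑ k ∈ Ico 1 n, (k : ℝ) ^ (u - 1) - 1 / u * (n : ℝ) ^ u| ≤
      (n : ℝ) ^ (u - 1) + (1 + 1 / u) := by
  have comparison := abs_sum_Ico_rpow_sub_integral_le (u - 1) one_pos hn
  rw [integral_rpow (Or.inl (by linarith)), sub_add_cancel, Nat.cast_one, Real.one_rpow,
    Real.one_rpow] at comparison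
  have hpow : 0 ≤ (n : ℝ) ^ (u - 1) := by positivity
  calc
    _ = |(∑ k ∈ Ico 1 n, (k : ℝ) ^ (u - 1) - ((n : ℝ) ^ u - 1) / u) - 1 / u| := by
      congr 1; ring
    _ ≤ |(n : ℝ) ^ (u - 1) - 1| + 1 / u := by
      grw [abs_sub, comparison, abs_of_pos (one_div_pos.2 hu)]
    _ ≤ (n : ℝ) ^ (u - 1) + (1 + 1 / u) := by
      grw [abs_sub, abs_of_nonneg hpow, abs_one, add_assoc]

theorem isBigO_natCast_rpow_of_le {s t : ℝ} (hst : s ≤ t) :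
    (fun n : ℕ => (n : ℝ) ^ s) =O[atTop] fun n : ℕ => (n : ℝ) ^ t := by
  refine .of_norm_eventuallyLE ?_
  filter_upwards [eventually_ge_atTop 1] with n hn
  rw [Real.norm_of_nonneg (by positivity)]
  exact Real.rpow_le_rpow_of_exponent_le (Nat.one_le_cast.2 hn) hst

theorem isBigO_sum_Ico_rpow_sub {u v : ℝ} (hu : 0 < u) (hv : 0 ≤ v) (huv : u - 1 ≤ v) :
    (fun n : ℕ => ∑ k ∈ Ico 1 n, (k : ℝ) ^ (u - 1) - 1 / u * (n : ℝ) ^ u)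
      =O[atTop] fun n : ℕ => (n : ℝ) ^ v := by
  have const : (fun _ : ℕ => 1 + 1 / u) =O[atTop] fun n : ℕ => (n : ℝ) ^ v := by
    simpa using (isBigO_natCast_rpow_of_le hv).const_mul_left (1 + 1 / u)
  refine IsBigO.trans (.of_bound' ?_) ((isBigO_natCast_rpow_of_le huv).add const)
  filter_upwards [eventually_ge_atTop 1] with n hn
  exact (abs_sum_Ico_rpow_sub_le hu hn).trans (le_abs_self _)

theorem isBigO_sum_Ico_rpow {u : ℝ} (hu : 0 < u) :
    (fun n : ℕ => ∑ k ∈ Ico 1 n, (k : ℝ) ^ (u - 1)) =O[atTop] fun n : ℕ => (n : ℝ) ^ u := by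
  simpa only [sub_add_cancel] using
    (isBigO_sum_Ico_rpow_sub hu hu.le (by linarith)).add
      ((isBigO_refl (fun n : ℕ => (n : ℝ) ^ u) atTop).const_mul_left (1 / u))

theorem natCast_rpow_sub_one_mul_rpow {k : ℕ} (hk : 0 < k) (q s : ℝ) :
    (k : ℝ) ^ (q - 1) * (k : ℝ) ^ s = (k : ℝ) ^ (s + q - 1) := by
  rw [← Real.rpow_add (Nat.cast_pos.2 hk)]
  ring_nf

section WeightedSum

variable {F : ℕ → ℝ} {A q s t : ℝ}

theorem isBigO_sum_Ico_rpow_mul (hF : F =O[atTop] fun n : ℕ => (n : ℝ) ^ t) (htq : 0 < t + q) :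
    (fun n : ℕ => ∑ k ∈ Ico 1 n, (k : ℝ) ^ (q - 1) * F k)
      =O[atTop] fun n : ℕ => (n : ℝ) ^ (t + q) := by
  obtain ⟨C, -, hC⟩ := bound_of_isBigO_nat_atTop hF
  refine IsBigO.trans (.of_bound C (.of_forall fun n => ?_)) (isBigO_sum_Ico_rpow htq)
  rw [Real.norm_of_nonneg (by positivity : 0 ≤ ∑ k ∈ Ico 1 n, (k : ℝ) ^ (t + q - 1)), mul_sum]
  refine norm_sum_le_of_le _ fun k hk => ?_
  have hk : 0 < k := (mem_Ico.1 hk).1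
  have bound : ‖F k‖ ≤ C * (k : ℝ) ^ t := by
    simpa only [Real.norm_of_nonneg (Real.rpow_nonneg k.cast_nonneg t)] using
      hC (Real.rpow_pos_of_pos (Nat.cast_pos.2 hk) t).ne'
  calc
    ‖(k : ℝ) ^ (q - 1) * F k‖ = (k : ℝ) ^ (q - 1) * ‖F k‖ := by
      rw [norm_mul, Real.norm_of_nonneg (by positivity)]
    _ ≤ (k : ℝ) ^ (q - 1) * (C * (k : ℝ) ^ t) := by gcongr
    _ = C * (k : ℝ) ^ (t + q - 1) := by
      rw [mul_left_comm, natCast_rpow_sub_one_mul_rpow hk]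

theorem isBigO_sum_Ico_rpow_mul_sub
    (hF : (fun n : ℕ => F n - A * (n : ℝ) ^ s) =O[atTop] fun n : ℕ => (n : ℝ) ^ t)
    (hsq : 0 < s + q) (htq : 0 < t + q) (hst : s ≤ t + 1) :
    (fun n : ℕ => ∑ k ∈ Ico 1 n, (k : ℝ) ^ (q - 1) * F k - A / (s + q) * (n : ℝ) ^ (s + q))
      =O[atTop] fun n : ℕ => (n : ℝ) ^ (t + q) := by
  have error := isBigO_sum_Ico_rpow_mul hF htq
  have main := (isBigO_sum_Ico_rpow_sub hsq htq.le (by linarith)).const_mul_left A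
  refine (error.add main).congr_left fun n => ?_
  have expand : ∑ k ∈ Ico 1 n, (k : ℝ) ^ (q - 1) * (F k - A * (k : ℝ) ^ s) =
      ∑ k ∈ Ico 1 n, (k : ℝ) ^ (q - 1) * F k - A * ∑ k ∈ Ico 1 n, (k : ℝ) ^ (s + q - 1) := by
    rw [mul_sum, ← sum_sub_distrib]
    refine sum_congr rfl fun k hk => ?_
    rw [mul_sub, mul_left_comm, natCast_rpow_sub_one_mul_rpow (mem_Ico.1 hk).1]
  rw [expand]
  ring

theorem isBigO_sum_Icc_rpow_mul_sub
    (hF : (fun n : ℕ => F n - A * (n : ℝ) ^ s) =O[atTop] fun n : ℕ => (n : ℝ) ^ t)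
    (hsq : 0 < s + q) (htq : 0 < t + q) (hst : s ≤ t + 1) :
    (fun n : ℕ => ∑ k ∈ Icc 1 n, (k : ℝ) ^ (q - 1) * F k - A / (s + q) * (n : ℝ) ^ (s + q))
      =O[atTop] fun n : ℕ => (n : ℝ) ^ (t + q) := by
  have growth : F =O[atTop] fun n : ℕ => (n : ℝ) ^ (t + 1) := by
    simpa only [sub_add_cancel] using
      (hF.trans (isBigO_natCast_rpow_of_le (by linarith))).add
        ((isBigO_natCast_rpow_of_le hst).const_mul_left A)
  have last : (fun n : ℕ => (n : ℝ) ^ (q - 1) * F n) =O[atTop] fun n : ℕ => (n : ℝ) ^ (t + q) := by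
    refine ((isBigO_refl (fun n : ℕ => (n : ℝ) ^ (q - 1)) atTop).mul growth).congr' .rfl ?_
    filter_upwards [eventually_ge_atTop 1] with n hn
    rw [natCast_rpow_sub_one_mul_rpow hn]
    ring_nf
  refine ((isBigO_sum_Ico_rpow_mul_sub hF hsq htq hst).add last).congr' ?_ .rfl
  filter_upwards [eventually_ge_atTop 1] with n hn
  rw [← sum_Ico_add_eq_sum_Icc hn]
  ring

end WeightedSum

theorem triple_sum_linear_estimate_general {p q r : ℝ} (hp : 0 < p) (hp_le : p ≤ 1) (hq : 0 < q)
    (hqr : 0 < q + r) :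
    ∃ C : ℝ, 0 < C ∧ ∀ n : ℕ, 1 ≤ n →
      |(∑ a ∈ Icc 1 n, ∑ b ∈ Ioc a n, ∑ c ∈ Ioc b n,
          (a : ℝ) ^ (p - 1) * (b : ℝ) ^ (q - 1) * (c : ℝ) ^ (r - 1))
        - 1 / (p * (p + q) * (p + q + r)) * (n : ℝ) ^ (p + q + r)| ≤ C * (n : ℝ) ^ (q + r) := by
  have single := isBigO_sum_Ico_rpow_sub hp le_rfl (by linarith)
  have double := isBigO_sum_Ico_rpow_mul_sub (q := q) single (by linarith) (by linarith)
    (by linarith)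
  rw [zero_add] at double
  have triple := isBigO_sum_Icc_rpow_mul_sub (q := r) double (by linarith) hqr (by linarith)
  obtain ⟨C, hC, bound⟩ := bound_of_isBigO_nat_atTop triple
  refine ⟨C, hC, fun n hn => ?_⟩
  have hpow : 0 < (n : ℝ) ^ (q + r) := Real.rpow_pos_of_pos (Nat.cast_pos.2 hn) _
  rw [sum_Icc_sum_Ioc_sum_Ioc_comm]
  simpa only [mul_sum, mul_comm, mul_left_comm, div_div, Real.norm_eq_abs, abs_of_pos hpow]
    using bound hpow.ne'


/-- The triple-sum estimate behind Proposition 4.2: for `β > 0` there is `C > 0` depending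
only on `β` such that for all `n ≥ 1`,
`|Σ_{1≤a<b<c≤n} a^{−2/(2+β)} b^{−(1+β)/(2+β)} c^{−(1+β)/(2+β)} − ((2+β)²/(β(1+β)))·n|
  ≤ C·n^{2/(2+β)}`. -/
theorem triple_sum_linear_estimate (β : ℝ) (hβ : 0 < β) :
    ∃ C : ℝ, 0 < C ∧ ∀ n : ℕ, 1 ≤ n →
      |(∑ a ∈ Finset.Icc 1 n, ∑ b ∈ Finset.Ioc a n, ∑ c ∈ Finset.Ioc b n,
          (a : ℝ) ^ (-(2 / (2 + β))) * (b : ℝ) ^ (-((1 + β) / (2 + β)))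
            * (c : ℝ) ^ (-((1 + β) / (2 + β))))
        - ((2 + β) ^ 2 / (β * (1 + β))) * (n : ℝ)| ≤ C * (n : ℝ) ^ (2 / (2 + β)) := by
  have hβ₂ : 0 < 2 + β := by linarith
  have hp : 0 < β / (2 + β) := by positivity
  have hp_le : β / (2 + β) ≤ 1 := (div_le_one hβ₂).2 (by linarith)
  have hq : 0 < 1 / (2 + β) := by positivity
  have exponent_a : β / (2 + β) - 1 = -(2 / (2 + β)) := by field_simp; ring
  have exponent_bc : 1 / (2 + β) - 1 = -((1 + β) / (2 + β)) := by field_simp; ring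
  have exponent_main : β / (2 + β) + 1 / (2 + β) + 1 / (2 + β) = 1 := by field_simp; ring
  have exponent_error : 1 / (2 + β) + 1 / (2 + β) = 2 / (2 + β) := by ring
  have coefficient : 1 / (β / (2 + β) * (β / (2 + β) + 1 / (2 + β)) * 1) =
      (2 + β) ^ 2 / (β * (1 + β)) := by field_simp; ring
  simpa only [exponent_a, exponent_bc, exponent_main, exponent_error, coefficient,
    Real.rpow_one] using triple_sum_linear_estimate_general hp hp_le hq (add_pos hq hq)
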